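/- Let l and r be positive integers and let g : A_l → A_r be an isomorphism of ℚ-algebras which maps the ℚ-linear span of the residue classes of a and x in A_l into the ℚ-linear span of the residue classes of a and x in A_r. Then l = r. -/

import Mathlib

open MvPolynomial

/-- The ideal `(a⁶, a²x, l²a⁴ + (6l−2)ax³ + lx⁴)` in `ℚ[a,x]`, where `a = X 0` and
`x = X 1`. -/
noncomputable def blowUpIdeal (l : ℕ) : Ideal (MvPolynomial (Fin 2) ℚ) :=
  Ideal.span
    { X 0 ^ 6, X 0 ^ 2 * X 1,
      C ((l : ℚ) ^ 2) * X 0 ^ 4 + C (6 * (l : ℚ) - 2) * X 0 * X 1 ^ 3 + C (l : ℚ) * X 1 ^ 4 }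

/-- `A_l = ℚ[a,x] / (a⁶, a²x, l²a⁴ + (6l−2)ax³ + lx⁴)`, the cohomology algebra of the
blow-up of `ℂP(5)` along the symplectic embedding `f_l : ℂP(1) → ℂP(5)`. -/
noncomputable abbrev BlowUpAlg (l : ℕ) : Type :=
  MvPolynomial (Fin 2) ℚ ⧸ blowUpIdeal l

/-- The residue class of `a` in `A_l`. -/
noncomputable def aBar (l : ℕ) : BlowUpAlg l := Ideal.Quotient.mk (blowUpIdeal l) (X 0)

/-- The residue class of `x` in `A_l`. -/
noncomputable def xBar (l : ℕ) : BlowUpAlg l := Ideal.Quotient.mk (blowUpIdeal l) (X 1)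

/-- The exponent vector of `a^i x^j`. -/
noncomputable def bE (i j : ℕ) : Fin 2 →₀ ℕ := Finsupp.single 0 i + Finsupp.single 1 j

lemma bE_le (i j k m : ℕ) : bE k m ≤ bE i j ↔ k ≤ i ∧ m ≤ j := by
  simp [Finsupp.le_def, bE, Fin.forall_fin_two, Finsupp.single_apply]

lemma bE_sub (i j k m : ℕ) : bE i j - bE k m = bE (i - k) (j - m) := by
  ext t
  fin_cases t <;> simp [bE, Finsupp.single_apply]

lemma bE_inj (i j k m : ℕ) : bE i j = bE k m ↔ i = k ∧ j = m := by
  simp [Finsupp.ext_iff, bE, Fin.forall_fin_two, Finsupp.single_apply]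

lemma bE_coeff_mul (i j k m : ℕ) (c : ℚ) (s : MvPolynomial (Fin 2) ℚ) :
    coeff (bE i j) (s * monomial (bE k m) c)
      = if k ≤ i ∧ m ≤ j then coeff (bE (i - k) (j - m)) s * c else 0 := by
  rw [coeff_mul_monomial']
  simp only [bE_le, bE_sub]

lemma bE_coeff (i j k m : ℕ) (c : ℚ) :
    coeff (bE i j) (monomial (bE k m) c) = if k = i ∧ m = j then c else 0 := by
  rw [coeff_monomial]
  simp only [bE_inj]

lemma bE_mon (i j : ℕ) (c : ℚ) :
    (monomial (bE i j) c : MvPolynomial (Fin 2) ℚ) = C c * X 0 ^ i * X 1 ^ j := by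
  rw [X_pow_eq_monomial, X_pow_eq_monomial, C_mul_monomial, monomial_mul, bE]
  simp

lemma mem_blowUpIdeal {r : ℕ} {f : MvPolynomial (Fin 2) ℚ} (hf : f ∈ blowUpIdeal r) :
    ∃ p q s : MvPolynomial (Fin 2) ℚ,
      f = p * monomial (bE 6 0) 1 + q * monomial (bE 2 1) 1
        + (s * monomial (bE 4 0) ((r : ℚ) ^ 2) + s * monomial (bE 1 3) (6 * (r : ℚ) - 2)
          + s * monomial (bE 0 4) (r : ℚ)) := by
  unfold blowUpIdeal at hf
  rw [Ideal.mem_span_insert] at hf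
  obtain ⟨p, z, hz, rfl⟩ := hf
  rw [Ideal.mem_span_pair] at hz
  obtain ⟨q, s, rfl⟩ := hz
  refine ⟨p, q, s, ?_⟩
  simp only [bE_mon, C_1]
  ring

lemma mem_blowUpIdeal_deg1 {r : ℕ} {u v : ℚ}
    (h : monomial (bE 1 0) u + monomial (bE 0 1) v ∈ blowUpIdeal r) : u = 0 ∧ v = 0 := by
  obtain ⟨p, q, s, h⟩ := mem_blowUpIdeal h
  have h1 := congrArg (coeff (bE 1 0)) h
  have h2 := congrArg (coeff (bE 0 1)) h
  simp only [coeff_add, bE_coeff_mul, bE_coeff] at h1 h2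
  norm_num at h1 h2
  exact ⟨h1, h2⟩

lemma mem_blowUpIdeal_deg3 {r : ℕ} {u v w t : ℚ}
    (h : monomial (bE 3 0) u + monomial (bE 2 1) t + monomial (bE 1 2) v + monomial (bE 0 3) w
      ∈ blowUpIdeal r) : u = 0 ∧ v = 0 ∧ w = 0 := by
  obtain ⟨p, q, s, h⟩ := mem_blowUpIdeal h
  have h1 := congrArg (coeff (bE 3 0)) h
  have h2 := congrArg (coeff (bE 1 2)) h
  have h3 := congrArg (coeff (bE 0 3)) h
  simp only [coeff_add, bE_coeff_mul, bE_coeff] at h1 h2 h3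
  norm_num at h1 h2 h3
  exact ⟨h1, h2, h3⟩

lemma mem_blowUpIdeal_deg4 {r : ℕ} {u v w : ℚ}
    (h : monomial (bE 4 0) u + monomial (bE 1 3) v + monomial (bE 0 4) w
      ∈ blowUpIdeal r) :
    ∃ c : ℚ, u = c * (r : ℚ) ^ 2 ∧ v = c * (6 * (r : ℚ) - 2) ∧ w = c * (r : ℚ) := by
  obtain ⟨p, q, s, h⟩ := mem_blowUpIdeal h
  have h1 := congrArg (coeff (bE 4 0)) h
  have h2 := congrArg (coeff (bE 1 3)) h
  have h3 := congrArg (coeff (bE 0 4)) h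
  simp only [coeff_add, bE_coeff_mul, bE_coeff] at h1 h2 h3
  norm_num at h1 h2 h3
  exact ⟨_, h1, h2, h3⟩

lemma aBar_ne_zero (l : ℕ) : aBar l ≠ 0 := by
  intro h
  have h' := Ideal.Quotient.eq_zero_iff_mem.1 h
  have := @mem_blowUpIdeal_deg1 l 1 0 (by simpa [bE_mon] using h')
  exact one_ne_zero this.1

lemma xBar_ne_zero (l : ℕ) : xBar l ≠ 0 := by
  intro h
  have h' := Ideal.Quotient.eq_zero_iff_mem.1 h
  have := @mem_blowUpIdeal_deg1 l 0 1 (by simpa [bE_mon] using h')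
  exact one_ne_zero this.2

lemma blow_rel3 (l : ℕ) : aBar l ^ 2 * xBar l = 0 := by
  unfold aBar xBar
  rw [← map_pow, ← map_mul]
  exact Ideal.Quotient.eq_zero_iff_mem.2 (Ideal.subset_span (by simp))

lemma blow_algebraMap (l : ℕ) (c : ℚ) :
    algebraMap ℚ (BlowUpAlg l) c = Ideal.Quotient.mk (blowUpIdeal l) (C c) := rfl

lemma blow_rel4 (l : ℕ) :
    algebraMap ℚ (BlowUpAlg l) ((l : ℚ) ^ 2) * aBar l ^ 4
      + algebraMap ℚ (BlowUpAlg l) (6 * (l : ℚ) - 2) * aBar l * xBar l ^ 3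
      + algebraMap ℚ (BlowUpAlg l) (l : ℚ) * xBar l ^ 4 = 0 := by
  simp only [blow_algebraMap]
  unfold aBar xBar
  simp only [← map_pow, ← map_mul, ← map_add]
  exact Ideal.Quotient.eq_zero_iff_mem.2 (Ideal.subset_span (by simp))

/-- The final arithmetic step. -/
lemma blow_arith_dvd {l r : ℤ} (h : l ^ 5 * (3 * r - 1) ^ 4 = r ^ 5 * (3 * l - 1) ^ 4) :
    l ∣ r := by
  have hc : IsCoprime l (3 * l - 1) := ⟨3, -1, by ring⟩
  have h1 : l ^ 5 ∣ r ^ 5 * (3 * l - 1) ^ 4 := ⟨_, h.symm⟩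
  have h2 : l ^ 5 ∣ r ^ 5 := (hc.pow (m := 5) (n := 4)).dvd_of_dvd_mul_right h1
  exact (Int.pow_dvd_pow_iff (by norm_num)).1 h2

/-- If `l`, `r` are positive integers and `g : A_l → A_r` is an isomorphism of
`ℚ`-algebras mapping the span of the residue classes of `a` and `x` in `A_l` into the
span of the residue classes of `a` and `x` in `A_r` (i.e. `g` is an isomorphism of
graded algebras), then `l = r`. -/
theorem blowUpAlg_iso_imp_eq (l r : ℕ) (hl : 0 < l) (hr : 0 < r)
    (g : BlowUpAlg l ≃ₐ[ℚ] BlowUpAlg r)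
    (hg : ∀ y ∈ Submodule.span ℚ ({aBar l, xBar l} : Set (BlowUpAlg l)),
      g y ∈ Submodule.span ℚ ({aBar r, xBar r} : Set (BlowUpAlg r))) :
    l = r := by
  obtain ⟨α, β, hα⟩ := Submodule.mem_span_pair.1 (hg (aBar l) (Submodule.subset_span (by simp)))
  obtain ⟨γ, δ, hγ⟩ := Submodule.mem_span_pair.1 (hg (xBar l) (Submodule.subset_span (by simp)))
  replace hα : algebraMap ℚ (BlowUpAlg r) α * aBar r + algebraMap ℚ (BlowUpAlg r) β * xBar r
      = g (aBar l) := by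
    rw [← Algebra.smul_def, ← Algebra.smul_def]
    exact hα
  replace hγ : algebraMap ℚ (BlowUpAlg r) γ * aBar r + algebraMap ℚ (BlowUpAlg r) δ * xBar r
      = g (xBar l) := by
    rw [← Algebra.smul_def, ← Algebra.smul_def]
    exact hγ
  have ha0 : g (aBar l) ≠ 0 := by simpa using aBar_ne_zero l
  have hx0 : g (xBar l) ≠ 0 := by simpa using xBar_ne_zero l
  have e3 := congrArg g (blow_rel3 l)
  have e4 := congrArg g (blow_rel4 l)
  simp only [map_mul, map_pow, map_zero] at e3
  rw [map_add, map_add, map_mul, map_mul, map_mul, map_mul, map_zero,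
    AlgEquiv.commutes, AlgEquiv.commutes, AlgEquiv.commutes, map_pow g, map_pow g, map_pow g] at e4
  rw [← hα] at ha0 e3 e4
  rw [← hγ] at hx0 e3 e4
  have m3 : α ^ 2 * γ = 0 ∧ 2 * α * β * δ + β ^ 2 * γ = 0 ∧ β ^ 2 * δ = 0 := by
    simp only [blow_algebraMap, aBar, xBar, ← map_mul, ← map_add, ← map_pow] at e3
    have := Ideal.Quotient.eq_zero_iff_mem.1 e3
    refine @mem_blowUpIdeal_deg3 r _ _ _ (α ^ 2 * δ + 2 * α * β * γ) ?_
    convert this using 1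
    simp only [bE_mon, map_mul, map_add, map_pow, map_ofNat]
    ring
  obtain ⟨m1, m2, m3⟩ := m3
  have hβ : β = 0 := by
    by_contra hb
    have hd : δ = 0 := by simpa [hb] using m3
    subst hd
    have hc : γ = 0 := by simpa [hb] using m2
    subst hc
    simp at hx0
  subst hβ
  have hα0 : α ≠ 0 := by
    rintro rfl
    simp at ha0
  have hγ0 : γ = 0 := by simpa [hα0] using m1
  subst hγ0
  have hδ0 : δ ≠ 0 := by
    rintro rfl
    simp at hx0
  obtain ⟨c, k1, k2, k3⟩ : ∃ c : ℚ, (l : ℚ) ^ 2 * α ^ 4 = c * (r : ℚ) ^ 2 ∧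
      (6 * (l : ℚ) - 2) * α * δ ^ 3 = c * (6 * (r : ℚ) - 2) ∧ (l : ℚ) * δ ^ 4 = c * (r : ℚ) := by
    simp only [map_zero, zero_mul, add_zero, zero_add] at e4
    simp only [blow_algebraMap, aBar, xBar, ← map_mul, ← map_add, ← map_pow] at e4
    have := Ideal.Quotient.eq_zero_iff_mem.1 e4
    apply mem_blowUpIdeal_deg4
    convert this using 1
    simp only [bE_mon, map_mul, map_pow]
    ring
  have hl' : (l : ℚ) ≠ 0 := by positivity
  have hr' : (r : ℚ) ≠ 0 := by positivity
  have j1 : (l : ℚ) * α ^ 4 = r * δ ^ 4 := by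
    apply mul_left_cancel₀ hl'
    linear_combination k1 - r * k3
  have j2 : (3 * (l : ℚ) - 1) * r * α = (3 * r - 1) * l * δ := by
    apply mul_left_cancel₀ (pow_ne_zero 3 hδ0)
    linear_combination (r / 2 : ℚ) * k2 - (3 * r - 1) * k3
  have j3 : (l : ℚ) ^ 5 * (3 * r - 1) ^ 4 = r ^ 5 * (3 * l - 1) ^ 4 := by
    apply mul_left_cancel₀ (pow_ne_zero 4 hδ0)
    have j4 : ((3 * (l : ℚ) - 1) * r * α) ^ 4 = ((3 * r - 1) * l * δ) ^ 4 := by rw [j2]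
    linear_combination (-(l : ℚ)) * j4 + (3 * (l : ℚ) - 1) ^ 4 * r ^ 4 * j1
  have j5 : (l : ℤ) ^ 5 * (3 * (r : ℤ) - 1) ^ 4 = (r : ℤ) ^ 5 * (3 * (l : ℤ) - 1) ^ 4 := by
    exact_mod_cast j3
  exact Nat.dvd_antisymm (Int.natCast_dvd_natCast.1 (blow_arith_dvd j5))
    (Int.natCast_dvd_natCast.1 (blow_arith_dvd j5.symm))
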